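/- The cardinality of the set 𝓔(X) of ends of X equals the supremum, over all compact subsets K ⊆ X, of the number n(K) of ends of X relative to K; in particular, 𝓔(X) is finite with cardinality sup_K n(K) whenever this supremum is finite, and 𝓔(X) is infinite otherwise. -/

import Mathlib

open Set Topology

/-- `E` is a connected component of the set `S` in `X`. -/
def IsCCIn {X : Type*} [TopologicalSpace X] (S E : Set X) : Prop :=
  ∃ x ∈ S, E = connectedComponentIn S x

/-- `E` is an end of `X` relative to the compact set `K`: a connected component of
`X \ K` that is not relatively compact. -/
def IsRelEnd {X : Type*} [TopologicalSpace X] (K E : Set X) : Prop :=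
  IsCCIn Kᶜ E ∧ ¬ IsCompact (closure E)

/-- The set `𝓔(K, X)` of ends of `X` relative to the compact set `K`. -/
def relEnds {X : Type*} [TopologicalSpace X] (K : Set X) : Set (Set X) :=
  {E | IsRelEnd K E}

/-- The set `𝓔(X)` of ends of `X`: functions assigning to each compact subset `K` of `X`
a connected component of `X \ K`, such that `𝖤(H) ⊆ 𝖤(K)` whenever `K ⊆ H`. -/
def Ends (X : Type*) [TopologicalSpace X] : Set ({K : Set X // IsCompact K} → Set X) :=
  {E | (∀ K : {K : Set X // IsCompact K}, IsCCIn (K : Set X)ᶜ (E K)) ∧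
       ∀ K H : {K : Set X // IsCompact K}, (K : Set X) ⊆ (H : Set X) → E H ⊆ E K}

section

variable {X : Type*} [TopologicalSpace X]

theorem IsCCIn.nonempty {S C : Set X} (hC : IsCCIn S C) : C.Nonempty := by
  obtain ⟨x, hx, rfl⟩ := hC
  exact ⟨x, mem_connectedComponentIn hx⟩

theorem IsCCIn.subset {S C : Set X} (hC : IsCCIn S C) : C ⊆ S := by
  obtain ⟨x, -, rfl⟩ := hC
  exact connectedComponentIn_subset S x

theorem IsCCIn.eq_connectedComponentIn {S C : Set X} (hC : IsCCIn S C) {y : X} (hy : y ∈ C) :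
    C = connectedComponentIn S y := by
  obtain ⟨x, -, rfl⟩ := hC
  exact connectedComponentIn_eq hy

theorem IsCCIn.isPreconnected {S C : Set X} (hC : IsCCIn S C) : IsPreconnected C := by
  obtain ⟨x, -, rfl⟩ := hC
  exact isPreconnected_connectedComponentIn

theorem IsCCIn.eq_of_inter_nonempty {S C D : Set X} (hC : IsCCIn S C) (hD : IsCCIn S D)
    (h : (C ∩ D).Nonempty) : C = D := by
  obtain ⟨y, hyC, hyD⟩ := h
  rw [hC.eq_connectedComponentIn hyC, ← hD.eq_connectedComponentIn hyD]

theorem IsCCIn.subset_of_inter_nonempty {S T C D : Set X} (hC : IsCCIn S C) (hD : IsCCIn T D)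
    (hTS : T ⊆ S) (h : (D ∩ C).Nonempty) : D ⊆ C := by
  obtain ⟨y, hyD, hyC⟩ := h
  rw [hC.eq_connectedComponentIn hyC]
  exact hD.isPreconnected.subset_connectedComponentIn hyD (hD.subset.trans hTS)

/-- Outside a suitable compact set, the complement of a compact set is covered by finitely many
of its connected components. -/
theorem IsCompact.exists_finite_components_cover [ConnectedSpace X] [LocallyCompactSpace X]
    [LocallyConnectedSpace X] [T2Space X] {K : Set X} (hK : IsCompact K) :
    ∃ L : Set X, IsCompact L ∧ ∃ t : Finset X, (∀ x ∈ t, x ∈ Kᶜ) ∧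
      Lᶜ ⊆ ⋃ x ∈ t, connectedComponentIn Kᶜ x := by
  obtain ⟨x₀⟩ : Nonempty X := inferInstance
  obtain ⟨L, hL, hKL⟩ := exists_compact_superset (hK.insert x₀)
  have hKL' : K ⊆ interior L := (subset_insert _ _).trans hKL
  have hx₀ : x₀ ∈ L := interior_subset (hKL (mem_insert _ _))
  have hfr : frontier L ⊆ Kᶜ := fun x hx hxK => hx.2 (hKL' hxK)
  have hopen (x : X) : IsOpen (connectedComponentIn Kᶜ x) :=
    hK.isClosed.isOpen_compl.connectedComponentIn
  have hfrc : IsCompact (frontier L) :=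
    hL.of_isClosed_subset isClosed_frontier hL.isClosed.frontier_subset
  obtain ⟨t, ht, htc⟩ := hfrc.elim_nhds_subcover (connectedComponentIn Kᶜ)
    fun x hx => (hopen x).mem_nhds (mem_connectedComponentIn (hfr hx))
  refine ⟨L, hL, t, fun x hx => hfr (ht x hx), fun y hy => ?_⟩
  have hyK : y ∈ Kᶜ := fun h => hy (interior_subset (hKL' h))
  have hyC := mem_connectedComponentIn hyK
  have hmeet : (connectedComponentIn Kᶜ y ∩ frontier L).Nonempty := by
    by_contra hne
    have hCL : connectedComponentIn Kᶜ y ⊆ Lᶜ := by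
      intro z hz hzL
      have hint {w : X} (hw : w ∈ connectedComponentIn Kᶜ y) (hwL : w ∈ L) : w ∈ interior L := by
        by_contra hwi
        exact hne ⟨w, hw, subset_closure hwL, hwi⟩
      obtain ⟨w, -, hwi, hwL⟩ := isPreconnected_connectedComponentIn (interior L) Lᶜ
        isOpen_interior hL.isClosed.isOpen_compl
        (fun w hw => (em (w ∈ L)).imp_left (hint hw)) ⟨z, hz, hint hz hzL⟩ ⟨y, hyC, hy⟩
      exact hwL (interior_subset hwi)
    have hclosed : IsClosed (connectedComponentIn Kᶜ y) := by
      refine isClosed_of_closure_subset fun z hz => ?_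
      have hzK : z ∈ Kᶜ := by
        intro hzK
        have := closure_mono hCL hz
        rw [closure_compl] at this
        exact this (hKL' hzK)
      obtain ⟨w, hwz, hwy⟩ := mem_closure_iff.1 hz _ (hopen z) (mem_connectedComponentIn hzK)
      rw [connectedComponentIn_eq hwy, ← connectedComponentIn_eq hwz]
      exact mem_connectedComponentIn hzK
    have huniv := IsClopen.eq_univ ⟨hclosed, hopen y⟩ ⟨y, hyC⟩
    exact hCL (huniv ▸ mem_univ x₀) hx₀
  obtain ⟨z, hzC, hzL⟩ := hmeet
  obtain ⟨x, hxt, hzx⟩ := mem_iUnion₂.1 (htc hzL)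
  refine mem_iUnion₂.2 ⟨x, hxt, ?_⟩
  rwa [connectedComponentIn_eq hzx, ← connectedComponentIn_eq hzC]

/-- An ultrafilter finer than the cocompact filter contains a component of the complement of every
compact set. -/
theorem IsCompact.exists_isCCIn_compl_mem_ultrafilter [ConnectedSpace X] [LocallyCompactSpace X]
    [LocallyConnectedSpace X] [T2Space X] {K : Set X} (hK : IsCompact K) (U : Ultrafilter X)
    (hU : (U : Filter X) ≤ Filter.cocompact X) : ∃ C, IsCCIn Kᶜ C ∧ C ∈ U := by
  obtain ⟨L, hL, t, ht, hcover⟩ := hK.exists_finite_components_cover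
  have hmem : (⋃ x ∈ (t : Set X), connectedComponentIn Kᶜ x) ∈ U :=
    Filter.mem_of_superset (hU hL.compl_mem_cocompact) hcover
  obtain ⟨x, hxt, hx⟩ := (Ultrafilter.finite_biUnion_mem_iff t.finite_toSet).1 hmem
  exact ⟨_, ⟨x, ht x hxt, rfl⟩, hx⟩

theorem relEnds.exists_end_apply_eq [ConnectedSpace X] [LocallyCompactSpace X]
    [LocallyConnectedSpace X] [T2Space X] (K : {K : Set X // IsCompact K}) {C : Set X}
    (hC : C ∈ relEnds (K : Set X)) : ∃ E ∈ Ends X, E K = C := by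
  have hne : (Filter.cocompact X ⊓ Filter.principal C).NeBot := by
    rw [Filter.inf_principal_neBot_iff]
    intro s hs
    obtain ⟨L, hL, hLs⟩ := Filter.mem_cocompact.1 hs
    by_contra hempty
    refine hC.2 (hL.of_isClosed_subset isClosed_closure
      (closure_minimal (fun x hx => ?_) hL.isClosed))
    by_contra hxL
    exact hempty ⟨x, hLs hxL, hx⟩
  obtain ⟨U, hU⟩ := Ultrafilter.exists_le (Filter.cocompact X ⊓ Filter.principal C)
  have hUC : C ∈ U := (hU.trans inf_le_right) (Filter.mem_principal_self C)
  choose E hE hEU using fun H : {K : Set X // IsCompact K} =>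
    H.2.exists_isCCIn_compl_mem_ultrafilter U (hU.trans inf_le_left)
  refine ⟨E, ⟨hE, fun H₁ H₂ h => (hE H₁).subset_of_inter_nonempty (hE H₂) (compl_subset_compl.2 h)
    (U.nonempty_of_mem (Filter.inter_mem (hEU H₂) (hEU H₁)))⟩, ?_⟩
  exact (hE K).eq_of_inter_nonempty hC.1 (U.nonempty_of_mem (Filter.inter_mem (hEU K) hUC))

theorem Ends.apply_mem_relEnds {E : {K : Set X // IsCompact K} → Set X} (hE : E ∈ Ends X)
    (K : {K : Set X // IsCompact K}) : E K ∈ relEnds (K : Set X) := by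
  refine ⟨hE.1 K, fun hc => ?_⟩
  obtain ⟨x, hx⟩ := (hE.1 ⟨K ∪ closure (E K), K.2.union hc⟩).nonempty
  exact (hE.1 _).subset hx (Or.inr (subset_closure (hE.2 K _ subset_union_left hx)))

theorem Ends.apply_eq_of_subset {E F : {K : Set X // IsCompact K} → Set X} (hE : E ∈ Ends X)
    (hF : F ∈ Ends X) {K H : {K : Set X // IsCompact K}} (hKH : (K : Set X) ⊆ H)
    (h : E H = F H) : E K = F K := by
  obtain ⟨x, hx⟩ := (hE.1 H).nonempty
  exact (hE.1 K).eq_of_inter_nonempty (hF.1 K) ⟨x, hE.2 K H hKH hx, hF.2 K H hKH (h ▸ hx)⟩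

/-- Finitely many ends are separated by a single compact set. -/
theorem Ends.exists_injOn_eval {t : Set ({K : Set X // IsCompact K} → Set X)} (ht : t.Finite)
    (htE : t ⊆ Ends X) : ∃ H : {K : Set X // IsCompact K}, InjOn (fun E => E H) t := by
  have hsep (p : ({K : Set X // IsCompact K} → Set X) × ({K : Set X // IsCompact K} → Set X)) :
      ∃ K, p.1 K = p.2 K → p.1 = p.2 := by
    by_cases h : p.1 = p.2
    · exact ⟨⟨∅, isCompact_empty⟩, fun _ => h⟩
    · obtain ⟨K, hK⟩ := Function.ne_iff.1 h
      exact ⟨K, fun h' => (hK h').elim⟩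
  choose K hK using hsep
  refine ⟨⟨⋃ p ∈ t ×ˢ t, (K p : Set X), (ht.prod ht).isCompact_biUnion fun p _ => (K p).2⟩,
    fun E hE F hF h => hK (E, F) ?_⟩
  exact Ends.apply_eq_of_subset (htE hE) (htE hF)
    (subset_biUnion_of_mem (u := fun p => (K p : Set X)) (mk_mem_prod hE hF)) h

end

/-- The cardinality of the set of ends of X equals the supremum over all compact K of the
number of ends of X relative to K (as extended natural numbers, covering both the finite
and the infinite case). -/
theorem card_ends_eq_sup_relEnds_card {X : Type*} [TopologicalSpace X] [Nonempty X] [ConnectedSpace X]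
    [LocallyCompactSpace X] [LocallyConnectedSpace X] [SigmaCompactSpace X] [T2Space X] :
    (Ends X).encard = ⨆ K : {K : Set X // IsCompact K}, (relEnds (K : Set X)).encard := by
  apply le_antisymm
  · refine ENat.forall_natCast_le_iff_le.1 fun n hn => ?_
    obtain ⟨t, htE, htn⟩ := exists_subset_encard_eq hn
    obtain ⟨H, hH⟩ := Ends.exists_injOn_eval (finite_of_encard_eq_coe htn) htE
    rw [← htn]
    exact (encard_le_encard_of_injOn (fun E hE => Ends.apply_mem_relEnds (htE hE) H) hH).trans
      (le_iSup (fun K : {K : Set X // IsCompact K} => (relEnds (K : Set X)).encard) H)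
  · refine iSup_le fun K => ?_
    refine (encard_le_encard fun C hC => ?_).trans (encard_image_le (fun E => E K) (Ends X))
    exact relEnds.exists_end_apply_eq K hC
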